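/- arXiv:1304.5392 — 2 statements merged into one kernel-verified Lean document; each statement's English description precedes it below -/
import Mathlib

section
/- Fix a real number k ≥ 1. The inequality (2/(k+2))·(sin(x)/x)^(k·p) + (k/(k+2))·(tan(x)/x)^p > 1 holds for every x ∈ (0, π/2) if and only if p > 0 or p ≤ −(ln(k+2) − ln 2)/(k·(ln π − ln 2)). -/
open Real Set

/-!
For `p > 0`, weighted AM-GM reduces the inequality to `cos x < (sin x / x) ^ 3`. For `p < 0`, the
term with `tan x / x` vanishes as `x → π / 2`, and the limit forces `p ≤ -s / k`, where
`(π / 2) ^ s = (k + 2) / 2`. Conversely, by convexity of `t ↦ t ^ (-p * k / s)`, it suffices to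
treat `p = -s / k`. Taking logarithms turns that case into the statement that a function exceeds its
value at `0`, and this function is increasing because

`(G + 2) * (x - sin x * cos x) < 2 * x * sin x ^ 2`, `G = (w ^ s - 1) / ((π / 2) ^ s - 1)`,
`w = π / 2 * (sin x / x)`.

As `G` decreases in `s`, and `k ≥ 1` gives `s ≥ 7 / 8`, only `s = 7 / 8` matters. There the tangent
lines of `w ^ (7 / 8)` at `w = π / 2` and at `w = 1` bound `G` well enough for `x ≤ 1.17` and
for `x > 1.17` respectively, and Taylor polynomials finish the proof.
-/

open Filter Topology

/-- The sum of the first `n` nonzero terms of the Maclaurin series of `sin`. -/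
noncomputable def sinTaylor (n : ℕ) (x : ℝ) : ℝ :=
  ∑ i ∈ Finset.range n, (-1) ^ i * (x ^ (2 * i + 1) / (2 * i + 1).factorial)

/-- The sum of the first `n` nonzero terms of the Maclaurin series of `cos`. -/
noncomputable def cosTaylor (n : ℕ) (x : ℝ) : ℝ :=
  ∑ i ∈ Finset.range n, (-1) ^ i * (x ^ (2 * i) / (2 * i).factorial)

lemma hasDerivAt_pow_div_factorial (n : ℕ) (x : ℝ) :
    HasDerivAt (fun x : ℝ ↦ x ^ (n + 1) / (n + 1).factorial) (x ^ n / n.factorial) x := by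
  refine ((hasDerivAt_pow (n + 1) x).div_const ((n + 1).factorial : ℝ)).congr_deriv ?_
  rw [Nat.factorial_succ, add_tsub_cancel_right]
  push_cast
  field_simp

lemma hasDerivAt_sinTaylor (n : ℕ) (x : ℝ) : HasDerivAt (sinTaylor n) (cosTaylor n x) x :=
  HasDerivAt.fun_sum fun i _ ↦ (hasDerivAt_pow_div_factorial (2 * i) x).const_mul _

lemma hasDerivAt_cosTaylor_succ (n : ℕ) (x : ℝ) :
    HasDerivAt (cosTaylor (n + 1)) (-sinTaylor n x) x := by
  have hterm (i : ℕ) : HasDerivAt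
      (fun x : ℝ ↦ (-1) ^ (i + 1) * (x ^ (2 * (i + 1)) / (2 * (i + 1)).factorial))
      ((-1) ^ (i + 1) * (x ^ (2 * i + 1) / (2 * i + 1).factorial)) x :=
    (hasDerivAt_pow_div_factorial (2 * i + 1) x).const_mul _
  have hsum := (HasDerivAt.fun_sum (u := Finset.range n) fun i _ ↦ hterm i).add_const 1
  refine (hsum.congr_deriv ?_).congr_of_eventuallyEq (.of_forall fun y ↦ ?_)
  · simp [sinTaylor, pow_succ]
  · simp [cosTaylor, Finset.sum_range_succ']

lemma nonneg_of_hasDerivAt_nonneg {f f' : ℝ → ℝ} (hf : ∀ x, HasDerivAt f (f' x) x)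
    (hf₀ : 0 ≤ f 0) (hf' : ∀ x, 0 ≤ x → 0 ≤ f' x) {x : ℝ} (hx : 0 ≤ x) : 0 ≤ f x := by
  have hmono : MonotoneOn f (Ici 0) :=
    monotoneOn_of_hasDerivWithinAt_nonneg (convex_Ici 0)
      (fun y _ ↦ (hf y).continuousAt.continuousWithinAt) (fun y _ ↦ (hf y).hasDerivWithinAt)
      fun y hy ↦ hf' y (interior_subset hy)
  exact hf₀.trans (hmono self_mem_Ici hx hx)

lemma sin_sub_sinTaylor_nonneg_of_cos {n : ℕ}
    (hcos : ∀ x, 0 ≤ x → 0 ≤ (-1) ^ n * (cos x - cosTaylor n x)) {x : ℝ} (hx : 0 ≤ x) :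
    0 ≤ (-1) ^ n * (sin x - sinTaylor n x) :=
  nonneg_of_hasDerivAt_nonneg
    (fun y ↦ ((hasDerivAt_sin y).sub (hasDerivAt_sinTaylor n y)).const_mul _)
    (by simp [sinTaylor]) hcos hx

lemma cos_sub_cosTaylor_succ_nonneg_of_sin {n : ℕ}
    (hsin : ∀ x, 0 ≤ x → 0 ≤ (-1) ^ n * (sin x - sinTaylor n x)) {x : ℝ} (hx : 0 ≤ x) :
    0 ≤ (-1) ^ (n + 1) * (cos x - cosTaylor (n + 1) x) := by
  refine nonneg_of_hasDerivAt_nonneg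
    (fun y ↦ ((hasDerivAt_cos y).sub (hasDerivAt_cosTaylor_succ n y)).const_mul _)
    (by simp [cosTaylor, Finset.sum_range_succ']) (fun y hy ↦ ?_) hx
  calc 0 ≤ (-1) ^ n * (sin y - sinTaylor n y) := hsin y hy
    _ = (-1) ^ (n + 1) * (-sin y - -sinTaylor n y) := by ring

lemma cos_sub_cosTaylor_succ_nonneg (n : ℕ) {x : ℝ} (hx : 0 ≤ x) :
    0 ≤ (-1) ^ (n + 1) * (cos x - cosTaylor (n + 1) x) := by
  induction n generalizing x with
  | zero => simpa [cosTaylor] using cos_le_one x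
  | succ n ih =>
    exact cos_sub_cosTaylor_succ_nonneg_of_sin
      (fun _ ↦ sin_sub_sinTaylor_nonneg_of_cos fun _ ↦ ih) hx

lemma sin_sub_sinTaylor_succ_nonneg (n : ℕ) {x : ℝ} (hx : 0 ≤ x) :
    0 ≤ (-1) ^ (n + 1) * (sin x - sinTaylor (n + 1) x) :=
  sin_sub_sinTaylor_nonneg_of_cos (fun _ ↦ cos_sub_cosTaylor_succ_nonneg n) hx

lemma sin_le_sub_add {x : ℝ} (hx : 0 ≤ x) : sin x ≤ x - x ^ 3 / 6 + x ^ 5 / 120 := by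
  have := sin_sub_sinTaylor_succ_nonneg 2 hx
  norm_num [sinTaylor, Finset.sum_range_succ, Nat.factorial] at this
  linarith

lemma sub_add_sub_le_sin {x : ℝ} (hx : 0 ≤ x) :
    x - x ^ 3 / 6 + x ^ 5 / 120 - x ^ 7 / 5040 ≤ sin x := by
  have := sin_sub_sinTaylor_succ_nonneg 3 hx
  norm_num [sinTaylor, Finset.sum_range_succ, Nat.factorial] at this
  linarith

lemma cos_le_one_sub_add {x : ℝ} (hx : 0 ≤ x) : cos x ≤ 1 - x ^ 2 / 2 + x ^ 4 / 24 := by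
  have := cos_sub_cosTaylor_succ_nonneg 2 hx
  norm_num [cosTaylor, Finset.sum_range_succ, Nat.factorial] at this
  linarith

lemma one_sub_add_sub_le_cos {x : ℝ} (hx : 0 ≤ x) :
    1 - x ^ 2 / 2 + x ^ 4 / 24 - x ^ 6 / 720 ≤ cos x := by
  have := cos_sub_cosTaylor_succ_nonneg 3 hx
  norm_num [cosTaylor, Finset.sum_range_succ, Nat.factorial] at this
  linarith

lemma cos_le_one_sub_add_sub_add {x : ℝ} (hx : 0 ≤ x) :
    cos x ≤ 1 - x ^ 2 / 2 + x ^ 4 / 24 - x ^ 6 / 720 + x ^ 8 / 40320 := by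
  have := cos_sub_cosTaylor_succ_nonneg 4 hx
  norm_num [cosTaylor, Finset.sum_range_succ, Nat.factorial] at this
  linarith

lemma one_lt_pi_div_two_mul_sinc {x : ℝ} (hx₀ : 0 ≤ x) (hx : x < π / 2) : 1 < π / 2 * sinc x := by
  rcases hx₀.eq_or_lt with rfl | hx₀
  · rw [sinc_zero]
    linarith [pi_gt_three]
  · have hjordan := mul_lt_sin hx₀ hx
    rw [sinc_of_ne_zero hx₀.ne', mul_div_assoc', lt_div_iff₀ hx₀]
    calc 1 * x = π / 2 * (2 / π * x) := by field_simp
      _ < π / 2 * sin x := by gcongr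

lemma sinc_pos_of_lt_pi_div_two {x : ℝ} (hx₀ : 0 ≤ x) (hx : x < π / 2) : 0 < sinc x :=
  pos_of_mul_pos_right (zero_lt_one.trans (one_lt_pi_div_two_mul_sinc hx₀ hx)) pi_div_two_pos.le

lemma hasDerivAt_sinc {x : ℝ} (hx : x ≠ 0) :
    HasDerivAt sinc ((x * cos x - sin x) / x ^ 2) x := by
  refine (((hasDerivAt_sin x).div (hasDerivAt_id x) hx).congr_deriv ?_).congr_of_eventuallyEq ?_
  · simp [mul_comm]
  · filter_upwards [isOpen_ne.mem_nhds hx] with y hy using sinc_of_ne_zero hy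

lemma tan_div_self_eq_sinc_div_cos {x : ℝ} (hx : x ≠ 0) : tan x / x = sinc x / cos x := by
  rw [sinc_of_ne_zero hx, tan_eq_sin_div_cos, div_right_comm]

lemma sin_pos_of_mem_Ioo_zero_pi_div_two {x : ℝ} (hx : x ∈ Ioo 0 (π / 2)) : 0 < sin x :=
  sin_pos_of_mem_Ioo ⟨hx.1, by linarith [hx.2, pi_pos]⟩

lemma cos_pos_of_mem_Ico_zero_pi_div_two {x : ℝ} (hx : x ∈ Ico 0 (π / 2)) : 0 < cos x :=
  cos_pos_of_mem_Ioo ⟨by linarith [hx.1, pi_pos], hx.2⟩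

lemma cos_lt_sinc_pow_three {x : ℝ} (hx : x ∈ Ioo 0 (π / 2)) : cos x < sinc x ^ 3 := by
  have hx₀ := hx.1
  have hu : x ^ 2 < 6 := by nlinarith [hx.2, pi_lt_four]
  have hsinc : 1 - x ^ 2 / 6 ≤ sinc x := by
    rw [sinc_of_ne_zero hx₀.ne', le_div_iff₀ hx₀]
    linarith [sin_ge_sub_cube hx₀.le]
  calc cos x ≤ 1 - x ^ 2 / 2 + x ^ 4 / 24 := cos_le_one_sub_add hx₀.le
    _ < (1 - x ^ 2 / 6) ^ 3 := by nlinarith [pow_pos hx₀ 4]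
    _ ≤ sinc x ^ 3 := by gcongr; linarith

/-- The power function `w ↦ w ^ s`, affinely renormalised to take the value `0` at `w = 1` and `1`
at `w = b`. The sign of the derivative of the Wilker gap depends on `s` through it alone. -/
noncomputable def rpowRatio (s b w : ℝ) : ℝ := (w ^ s - 1) / (b ^ s - 1)

section rpowRatio

variable {r s b w z : ℝ}

lemma rpowRatio_le_rpowRatio (hr : 0 < r) (hrs : r ≤ s) (hw : 1 < w) (hwb : w ≤ b) :
    rpowRatio s b w ≤ rpowRatio r b w := by
  have hb : 1 < b := hw.trans_le hwb
  have hwr : 1 < w ^ r := one_lt_rpow hw hr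
  have hbr : 1 < b ^ r := one_lt_rpow hb hr
  have hbs : 1 < b ^ s := one_lt_rpow hb (hr.trans_le hrs)
  have hpow {t : ℝ} (ht : 1 < t) : (t ^ r) ^ (s / r) = t ^ s := by
    rw [← rpow_mul (by linarith), mul_div_cancel₀ s hr.ne']
  have hsecant : (w ^ s - 1) / (w ^ r - 1) ≤ (b ^ s - 1) / (b ^ r - 1) := by
    simpa only [hpow hw, hpow hb, one_rpow] using
      (convexOn_rpow ((one_le_div hr).2 hrs)).secant_mono
        (mem_Ici.2 zero_le_one) (mem_Ici.2 (by linarith : 0 ≤ w ^ r))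
        (mem_Ici.2 (by linarith : 0 ≤ b ^ r)) hwr.ne' hbr.ne'
        (rpow_le_rpow (by linarith) hwb hr.le)
  rw [div_le_div_iff₀ (sub_pos.2 hwr) (sub_pos.2 hbr)] at hsecant
  rw [rpowRatio, rpowRatio, div_le_div_iff₀ (sub_pos.2 hbs) (sub_pos.2 hbr)]
  linarith

lemma rpowRatio_le_mul_sub_one (hr₀ : 0 ≤ r) (hr₁ : r ≤ 1) (hb : 1 ≤ b) (hw : 0 ≤ w) :
    rpowRatio r b w ≤ r / (b ^ r - 1) * (w - 1) := by
  have htangent : w ^ r ≤ 1 + r * (w - 1) := by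
    simpa using rpow_one_add_le_one_add_mul_self (by linarith : -1 ≤ w - 1) hr₀ hr₁
  rw [rpowRatio, div_mul_eq_mul_div]
  gcongr
  · exact sub_nonneg.2 (one_le_rpow hb hr₀)
  · linarith

lemma rpowRatio_mul_le (hr₀ : 0 < r) (hr₁ : r ≤ 1) (hb : 1 < b) (hz : 0 ≤ z) :
    rpowRatio r b (b * z) ≤ 1 - r * (b ^ r / (b ^ r - 1)) * (1 - z) := by
  have hbr : 0 < b ^ r - 1 := sub_pos.2 (one_lt_rpow hb hr₀)
  have htangent : z ^ r ≤ 1 + r * (z - 1) := by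
    simpa using rpow_one_add_le_one_add_mul_self (by linarith : -1 ≤ z - 1) hr₀.le hr₁
  calc rpowRatio r b (b * z) = (b ^ r * z ^ r - 1) / (b ^ r - 1) := by
        rw [rpowRatio, mul_rpow (by linarith) hz]
    _ ≤ (b ^ r * (1 + r * (z - 1)) - 1) / (b ^ r - 1) := by gcongr
    _ = 1 - r * (b ^ r / (b ^ r - 1)) * (1 - z) := by field_simp; ring

end rpowRatio

lemma pi_div_two_rpow_seven_eighths_pow_eight : ((π / 2) ^ (7 / 8 : ℝ)) ^ 8 = (π / 2) ^ 7 := by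
  rw [← rpow_mul_natCast (by positivity), ← rpow_natCast]
  norm_num

lemma le_pi_div_two_rpow_seven_eighths : 65 / 44 ≤ (π / 2) ^ (7 / 8 : ℝ) := by
  refine le_of_pow_le_pow_left₀ (n := 8) (by norm_num) (by positivity) ?_
  calc (65 / 44 : ℝ) ^ 8 ≤ 1.57 ^ 7 := by norm_num
    _ ≤ (π / 2) ^ 7 := pow_le_pow_left₀ (by norm_num) (by linarith [pi_gt_d2]) 7
    _ = ((π / 2) ^ (7 / 8 : ℝ)) ^ 8 := pi_div_two_rpow_seven_eighths_pow_eight.symm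

lemma pi_div_two_rpow_seven_eighths_le : (π / 2) ^ (7 / 8 : ℝ) ≤ 64 / 43 := by
  refine le_of_pow_le_pow_left₀ (n := 8) (by norm_num) (by norm_num) ?_
  calc ((π / 2) ^ (7 / 8 : ℝ)) ^ 8 = (π / 2) ^ 7 := pi_div_two_rpow_seven_eighths_pow_eight
    _ ≤ 1.5708 ^ 7 := pow_le_pow_left₀ (by positivity) (by linarith [pi_lt_d4]) 7
    _ ≤ (64 / 43) ^ 8 := by norm_num

lemma rpowRatio_seven_eighths_mul_le {z : ℝ} (hz₀ : 0 ≤ z) (hz₁ : z ≤ 1) :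
    rpowRatio (7 / 8) (π / 2) (π / 2 * z) ≤ 1 - 8 / 3 * (1 - z) := by
  have hb : 1 < π / 2 := by linarith [pi_gt_three]
  have hslope : 8 / 3 ≤ 7 / 8 * ((π / 2) ^ (7 / 8 : ℝ) / ((π / 2) ^ (7 / 8 : ℝ) - 1)) := by
    rw [mul_div_assoc', le_div_iff₀ (by linarith [le_pi_div_two_rpow_seven_eighths])]
    linarith [pi_div_two_rpow_seven_eighths_le]
  linarith [rpowRatio_mul_le (r := 7 / 8) (by norm_num) (by norm_num) hb hz₀,
    mul_le_mul_of_nonneg_right hslope (sub_nonneg.2 hz₁)]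

lemma rpowRatio_seven_eighths_le {w : ℝ} (hw : 1 ≤ w) :
    rpowRatio (7 / 8) (π / 2) w ≤ 11 / 6 * (w - 1) := by
  have hb : 1 ≤ π / 2 := by linarith [pi_gt_three]
  have hslope : 7 / 8 / ((π / 2) ^ (7 / 8 : ℝ) - 1) ≤ 11 / 6 := by
    rw [div_le_iff₀ (by linarith [le_pi_div_two_rpow_seven_eighths])]
    linarith [le_pi_div_two_rpow_seven_eighths]
  calc rpowRatio (7 / 8) (π / 2) w ≤ 7 / 8 / ((π / 2) ^ (7 / 8 : ℝ) - 1) * (w - 1) :=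
        rpowRatio_le_mul_sub_one (by norm_num) (by norm_num) hb (zero_le_one.trans hw)
    _ ≤ 11 / 6 * (w - 1) := mul_le_mul_of_nonneg_right hslope (sub_nonneg.2 hw)

lemma self_sub_sin_mul_cos_le {x : ℝ} (hx : 0 ≤ x) :
    x - sin x * cos x ≤ 2 / 3 * x ^ 3 * (1 - x ^ 2 / 5 + 2 * x ^ 4 / 105) := by
  have := sub_add_sub_le_sin (x := 2 * x) (by positivity)
  rw [sin_two_mul] at this
  linarith

lemma sub_add_sub_le_sin_sq {x : ℝ} (hx : 0 ≤ x) :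
    x ^ 2 * (1 - x ^ 2 / 3 + 2 * x ^ 4 / 45 - x ^ 6 / 315) ≤ sin x ^ 2 := by
  have := cos_le_one_sub_add_sub_add (x := 2 * x) (by positivity)
  rw [cos_two_mul, cos_sq'] at this
  linarith

lemma sin_sq_le_sub_add {x : ℝ} (hx : 0 ≤ x) :
    sin x ^ 2 ≤ x ^ 2 - x ^ 4 / 3 + 2 * x ^ 6 / 45 := by
  have := one_sub_add_sub_le_cos (x := 2 * x) (by positivity)
  rw [cos_two_mul, cos_sq'] at this
  linarith

lemma sub_le_sin_mul_cos {x : ℝ} (hx : 0 ≤ x) : x - 2 * x ^ 3 / 3 ≤ sin x * cos x := by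
  have := sin_ge_sub_cube (x := 2 * x) (by positivity)
  rw [sin_two_mul] at this
  linarith

lemma self_sub_sin_mul_cos_pos {x : ℝ} (hx : 0 < x) : 0 < x - sin x * cos x := by
  have := sin_lt (x := 2 * x) (by positivity)
  rw [sin_two_mul] at this
  linarith

lemma mul_self_sub_sin_mul_cos_lt_near_zero {x : ℝ} (hx₀ : 0 < x) (hx : x ≤ 117 / 100) :
    (3 - 8 / 3 * (1 - sinc x)) * (x - sin x * cos x) < 2 * x * sin x ^ 2 := by
  have hu : x ^ 2 ≤ 137 / 100 := by nlinarith
  have hsinc : sinc x ≤ 1 - (x ^ 2 / 6 - (x ^ 2) ^ 2 / 120) := by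
    rw [sinc_of_ne_zero hx₀.ne', div_le_iff₀ hx₀]
    linarith [sin_le_sub_add hx₀.le]
  have hpoly {u : ℝ} (hu₀ : 0 < u) (hu : u ≤ 137 / 100) :
      (3 - 8 / 3 * (u / 6 - u ^ 2 / 120)) * (1 - u / 5 + 2 * u ^ 2 / 105) <
        3 * (1 - u / 3 + 2 * u ^ 2 / 45 - u ^ 3 / 315) := by
    nlinarith [pow_pos hu₀ 2, pow_pos hu₀ 3, mul_nonneg (pow_pos hu₀ 3).le (sub_nonneg.2 hu)]
  calc (3 - 8 / 3 * (1 - sinc x)) * (x - sin x * cos x)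
      ≤ (3 - 8 / 3 * (x ^ 2 / 6 - (x ^ 2) ^ 2 / 120)) * (x - sin x * cos x) := by
        gcongr ?_ * _
        · exact (self_sub_sin_mul_cos_pos hx₀).le
        · linarith
    _ ≤ (3 - 8 / 3 * (x ^ 2 / 6 - (x ^ 2) ^ 2 / 120)) *
          (2 / 3 * x ^ 3 * (1 - x ^ 2 / 5 + 2 * x ^ 4 / 105)) := by
        gcongr
        · nlinarith
        · exact self_sub_sin_mul_cos_le hx₀.le
    _ = 2 / 3 * x ^ 3 * ((3 - 8 / 3 * (x ^ 2 / 6 - (x ^ 2) ^ 2 / 120)) *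
          (1 - x ^ 2 / 5 + 2 * (x ^ 2) ^ 2 / 105)) := by ring
    _ < 2 / 3 * x ^ 3 * (3 * (1 - x ^ 2 / 3 + 2 * (x ^ 2) ^ 2 / 45 - (x ^ 2) ^ 3 / 315)) := by
        gcongr ?_ * ?_
        exact hpoly (by positivity) hu
    _ = 2 * x * (x ^ 2 * (1 - x ^ 2 / 3 + 2 * x ^ 4 / 45 - x ^ 6 / 315)) := by ring
    _ ≤ 2 * x * sin x ^ 2 := by
        gcongr
        exact sub_add_sub_le_sin_sq hx₀.le

/- What remains near `π / 2` once `sin y` and `cos y`, `y = π / 2 - x`, are replaced by Taylor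
polynomials and a factor `y` is cancelled; `b` stands for `π / 2`. -/
lemma polynomial_lt_near_pi_div_two {b y : ℝ} (hb₀ : 1.57 < b) (hb : b < 1.571) (hy₀ : 0 < y)
    (hy : y < 401 / 1000) :
    11 / 6 * ((1 - b * (y / 2 - y ^ 3 / 24)) * (b - 2 * y + 2 * y ^ 3 / 3)) <
      2 * (b - y) * (1 - 2 * y ^ 2 / 3) -
        2 * (b - y) ^ 2 * (y - y ^ 3 / 3 + 2 * y ^ 5 / 45) := by
  have hcos : 0 < y / 2 - y ^ 3 / 24 := by nlinarith [pow_pos hy₀ 2]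
  have hsin_sq : 0 < y - y ^ 3 / 3 + 2 * y ^ 5 / 45 := by
    nlinarith [pow_pos hy₀ 2, pow_pos hy₀ 5]
  have hsin_cos : 0 < 1 - 2 * y ^ 2 / 3 := by nlinarith
  have hsub : 0 < b - 2 * y + 2 * y ^ 3 / 3 := by nlinarith [pow_pos hy₀ 3]
  have hone : 0 < 1 - 1.57 * (y / 2 - y ^ 3 / 24) := by nlinarith [pow_pos hy₀ 3]
  have hby : 0 < b - y := by linarith
  calc 11 / 6 * ((1 - b * (y / 2 - y ^ 3 / 24)) * (b - 2 * y + 2 * y ^ 3 / 3))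
      ≤ 11 / 6 * ((1 - 1.57 * (y / 2 - y ^ 3 / 24)) * (1.571 - 2 * y + 2 * y ^ 3 / 3)) := by
        gcongr
    _ < 2 * (1.57 - y) * (1 - 2 * y ^ 2 / 3) -
          2 * (1.571 - y) ^ 2 * (y - y ^ 3 / 3 + 2 * y ^ 5 / 45) := by
        nlinarith [mul_pos (pow_pos hy₀ 4) (sub_pos.2 hy), mul_pos (pow_pos hy₀ 6) (sub_pos.2 hy)]
    _ ≤ 2 * (b - y) * (1 - 2 * y ^ 2 / 3) -
          2 * (b - y) ^ 2 * (y - y ^ 3 / 3 + 2 * y ^ 5 / 45) := by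
        gcongr

lemma sin_cos_lt_near_pi_div_two {b y : ℝ} (hb₀ : 1.57 < b) (hb : b < 1.571) (hy₀ : 0 < y)
    (hy : y < 401 / 1000) :
    11 / 6 * ((y - b * (1 - cos y)) * (b - y - sin y * cos y)) <
      2 * (b - y) * (sin y * cos y) - 2 * (b - y) ^ 2 * sin y ^ 2 := by
  have hcos : y - b * (1 - cos y) ≤ y * (1 - b * (y / 2 - y ^ 3 / 24)) := by
    nlinarith [cos_le_one_sub_add hy₀.le]
  have hpos : 0 < 1 - b * (y / 2 - y ^ 3 / 24) := by nlinarith [pow_pos hy₀ 3]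
  have hsub : 0 < b - y - sin y * cos y := by linarith [self_sub_sin_mul_cos_pos hy₀]
  have hsub_le : b - y - sin y * cos y ≤ b - 2 * y + 2 * y ^ 3 / 3 := by
    linarith [sub_le_sin_mul_cos hy₀.le]
  have hby : 0 < b - y := by linarith
  calc 11 / 6 * ((y - b * (1 - cos y)) * (b - y - sin y * cos y))
      ≤ 11 / 6 * (y * (1 - b * (y / 2 - y ^ 3 / 24)) * (b - 2 * y + 2 * y ^ 3 / 3)) := by
        gcongr
    _ = y * (11 / 6 * ((1 - b * (y / 2 - y ^ 3 / 24)) * (b - 2 * y + 2 * y ^ 3 / 3))) := by ring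
    _ < y * (2 * (b - y) * (1 - 2 * y ^ 2 / 3) -
          2 * (b - y) ^ 2 * (y - y ^ 3 / 3 + 2 * y ^ 5 / 45)) := by
        gcongr
        exact polynomial_lt_near_pi_div_two hb₀ hb hy₀ hy
    _ = 2 * (b - y) * (y - 2 * y ^ 3 / 3) -
          2 * (b - y) ^ 2 * (y ^ 2 - y ^ 4 / 3 + 2 * y ^ 6 / 45) := by ring
    _ ≤ 2 * (b - y) * (sin y * cos y) - 2 * (b - y) ^ 2 * sin y ^ 2 := by
        gcongr
        · exact sub_le_sin_mul_cos hy₀.le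
        · exact sin_sq_le_sub_add hy₀.le

lemma mul_self_sub_sin_mul_cos_lt_near_pi_div_two {x : ℝ} (hx : x ∈ Ioo (117 / 100) (π / 2)) :
    (2 + 11 / 6 * (π / 2 * sinc x - 1)) * (x - sin x * cos x) < 2 * x * sin x ^ 2 := by
  have hx₀ : 0 < x := by linarith [hx.1]
  obtain ⟨y, rfl⟩ : ∃ y, x = π / 2 - y := ⟨π / 2 - x, by ring⟩
  have hmain := sin_cos_lt_near_pi_div_two (b := π / 2) (y := y) (by linarith [pi_gt_d2])
    (by linarith [pi_lt_d4]) (by linarith [hx.2]) (by linarith [hx.1, pi_lt_d4])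
  have hcancel : (π / 2 - y) * (2 + 11 / 6 * (π / 2 * (cos y / (π / 2 - y)) - 1)) =
      2 * (π / 2 - y) + 11 / 6 * (y - π / 2 * (1 - cos y)) := by
    generalize π / 2 = b at *
    field_simp
    ring
  refine lt_of_mul_lt_mul_left ?_ hx₀.le
  rw [sinc_of_ne_zero hx₀.ne', sin_pi_div_two_sub, cos_pi_div_two_sub, ← mul_assoc, hcancel,
    cos_sq']
  linarith

lemma rpowRatio_add_two_mul_lt {s x : ℝ} (hs : 7 / 8 ≤ s) (hx : x ∈ Ioo 0 (π / 2)) :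
    (rpowRatio s (π / 2) (π / 2 * sinc x) + 2) * (x - sin x * cos x) < 2 * x * sin x ^ 2 := by
  have hw : 1 < π / 2 * sinc x := one_lt_pi_div_two_mul_sinc hx.1.le hx.2
  have hz : sinc x ≤ 1 := sinc_le_one x
  have hanti : rpowRatio s (π / 2) (π / 2 * sinc x) ≤
      rpowRatio (7 / 8) (π / 2) (π / 2 * sinc x) :=
    rpowRatio_le_rpowRatio (by norm_num) hs hw (mul_le_of_le_one_right pi_div_two_pos.le hz)
  have hsub := self_sub_sin_mul_cos_pos hx.1
  rcases le_or_gt x (117 / 100) with hx₁ | hx₁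
  · have htangent :=
      rpowRatio_seven_eighths_mul_le (sinc_pos_of_lt_pi_div_two hx.1.le hx.2).le hz
    refine (mul_le_mul_of_nonneg_right ?_ hsub.le).trans_lt
      (mul_self_sub_sin_mul_cos_lt_near_zero hx.1 hx₁)
    linarith
  · have htangent := rpowRatio_seven_eighths_le hw.le
    refine (mul_le_mul_of_nonneg_right ?_ hsub.le).trans_lt
      (mul_self_sub_sin_mul_cos_lt_near_pi_div_two ⟨hx₁, hx.2⟩)
    linarith

lemma hasDerivAt_log_one_sub_rpow_neg {s w : ℝ} (hs : 0 < s) (hw : 1 < w) :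
    HasDerivAt (fun w ↦ log (1 - w ^ (-s))) (s / (w * (w ^ s - 1))) w := by
  have hw₀ : 0 < w := by linarith
  have hws : 1 < w ^ s := one_lt_rpow hw hs
  have hne : 1 - w ^ (-s) ≠ 0 :=
    (sub_pos.2 (rpow_lt_one_of_one_lt_of_neg hw (neg_lt_zero.2 hs))).ne'
  refine ((((hasDerivAt_id w).rpow_const (p := -s) (.inl hw₀.ne')).const_sub 1).log
    hne).congr_deriv ?_
  have hws' : w ^ s - 1 ≠ 0 := (sub_pos.2 hws).ne'
  simp only [id_eq, rpow_sub_one hw₀.ne', rpow_neg hw₀.le] at hne ⊢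
  field_simp

/-- With `s = log ((k + 2) / 2) / log (π / 2)`, the inequality `1 < wilkerSum k (-(s / k)) x` says
exactly that `wilkerGap k s x` exceeds its value at `x = 0`. -/
noncomputable def wilkerGap (k s x : ℝ) : ℝ :=
  log (cos x) - log (sinc x) - k / s * log (1 - (π / 2 * sinc x) ^ (-s))

section wilkerGap

variable {k s x : ℝ}

lemma hasDerivAt_wilkerGap (hs : 0 < s) (hx : x ∈ Ioo 0 (π / 2)) :
    HasDerivAt (wilkerGap k s)
      ((sin x - x * cos x) / (x * sin x) * (1 + k / ((π / 2 * sinc x) ^ s - 1)) -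
        sin x / cos x) x := by
  have hcos : cos x ≠ 0 := (cos_pos_of_mem_Ico_zero_pi_div_two ⟨hx.1.le, hx.2⟩).ne'
  have hsin : sin x ≠ 0 := (sin_pos_of_mem_Ioo_zero_pi_div_two hx).ne'
  have hw := one_lt_pi_div_two_mul_sinc hx.1.le hx.2
  have hws : (π / 2 * sinc x) ^ s - 1 ≠ 0 := (sub_pos.2 (one_lt_rpow hw hs)).ne'
  have hx₀ : x ≠ 0 := hx.1.ne'
  have hsinc := hasDerivAt_sinc hx₀
  have hlog := (hasDerivAt_log_one_sub_rpow_neg hs hw).comp x (hsinc.const_mul (π / 2))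
  refine ((((hasDerivAt_cos x).log hcos).sub
    (hsinc.log (sinc_pos_of_lt_pi_div_two hx.1.le hx.2).ne')).sub
    (hlog.const_mul (k / s))).congr_deriv ?_
  generalize (π / 2 * sinc x) ^ s - 1 = A at *
  rw [sinc_of_ne_zero hx₀]
  field_simp
  ring

lemma deriv_wilkerGap_pos (hk : 0 < k) (hs : 7 / 8 ≤ s) (hks : (π / 2) ^ s = (k + 2) / 2)
    (hx : x ∈ Ioo 0 (π / 2)) : 0 < deriv (wilkerGap k s) x := by
  have hx₀ := hx.1
  have hcos := cos_pos_of_mem_Ico_zero_pi_div_two ⟨hx.1.le, hx.2⟩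
  have hsin := sin_pos_of_mem_Ioo_zero_pi_div_two hx
  have hs₀ : 0 < s := by linarith
  have hws : 0 < (π / 2 * sinc x) ^ s - 1 :=
    sub_pos.2 (one_lt_rpow (one_lt_pi_div_two_mul_sinc hx.1.le hx.2) hs₀)
  have hkey := rpowRatio_add_two_mul_lt hs hx
  have hratio : rpowRatio s (π / 2) (π / 2 * sinc x) = ((π / 2 * sinc x) ^ s - 1) / (k / 2) := by
    rw [rpowRatio, hks]
    congr 1
    ring
  rw [hratio] at hkey
  rw [(hasDerivAt_wilkerGap hs₀ hx).deriv]
  generalize (π / 2 * sinc x) ^ s - 1 = A at *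
  have hscaled : (A + k) * (x - sin x * cos x) < k * (x * sin x ^ 2) :=
    calc (A + k) * (x - sin x * cos x)
        = k / 2 * ((A / (k / 2) + 2) * (x - sin x * cos x)) := by field_simp
      _ < k / 2 * (2 * x * sin x ^ 2) := by gcongr
      _ = k * (x * sin x ^ 2) := by ring
  have hexpand : cos x * (sin x - x * cos x) = x * sin x ^ 2 - (x - sin x * cos x) := by
    rw [sin_sq]
    ring
  have hcombine : (sin x - x * cos x) / (x * sin x) * (1 + k / A) =
      cos x * (sin x - x * cos x) * (A + k) / (cos x * (x * sin x * A)) := by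
    field_simp
  rw [sub_pos, hcombine, div_lt_div_iff₀ hcos (by positivity), hexpand]
  nlinarith

lemma wilkerGap_zero_lt (hk : 0 < k) (hs : 7 / 8 ≤ s) (hks : (π / 2) ^ s = (k + 2) / 2)
    (hx : x ∈ Ioo 0 (π / 2)) : wilkerGap k s 0 < wilkerGap k s x := by
  have hs₀ : 0 < s := by linarith
  have hcont : ContinuousOn (wilkerGap k s) (Ico 0 (π / 2)) := by
    intro y hy
    have hw := one_lt_pi_div_two_mul_sinc hy.1 hy.2
    have hlog := (hasDerivAt_log_one_sub_rpow_neg hs₀ hw).continuousAt.comp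
      (f := fun y ↦ π / 2 * sinc y) (x := y) (continuous_sinc.const_mul _).continuousAt
    exact (((continuous_cos.continuousAt.log (cos_pos_of_mem_Ico_zero_pi_div_two hy).ne').sub
      (continuous_sinc.continuousAt.log (sinc_pos_of_lt_pi_div_two hy.1 hy.2).ne')).sub
      (hlog.const_mul (k / s))).continuousWithinAt
  have hmono : StrictMonoOn (wilkerGap k s) (Ico 0 (π / 2)) :=
    strictMonoOn_of_deriv_pos (convex_Ico _ _) hcont fun y hy ↦
      deriv_wilkerGap_pos hk hs hks (interior_Ico (α := ℝ) ▸ hy)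
  exact hmono ⟨le_rfl, pi_div_two_pos⟩ ⟨hx.1.le, hx.2⟩ hx.1

lemma wilkerGap_zero (hk : 0 < k) (hks : (π / 2) ^ s = (k + 2) / 2) :
    wilkerGap k s 0 = -(k / s * log (k / (k + 2))) := by
  have hlimit : 1 - (π / 2) ^ (-s) = k / (k + 2) := by
    rw [rpow_neg pi_div_two_pos.le, hks]
    field_simp
    ring
  simp [wilkerGap, hlimit]

end wilkerGap

lemma one_lt_add_mul_rpow {α β A B t : ℝ} (hα : 0 ≤ α) (hβ : 0 ≤ β) (hαβ : α + β = 1)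
    (hA : 0 ≤ A) (hB : 0 ≤ B) (ht : 1 ≤ t) (h : 1 < α * A + β * B) :
    1 < α * A ^ t + β * B ^ t :=
  calc 1 < (α * A + β * B) ^ t := one_lt_rpow h (by linarith)
    _ ≤ α * A ^ t + β * B ^ t := (convexOn_rpow ht).2 hA hB hα hβ hαβ

/-- The left-hand side of the weighted Wilker inequality with weight parameter `k` and
exponent `p`. -/
noncomputable def wilkerSum (k p x : ℝ) : ℝ :=
  2 / (k + 2) * (sin x / x) ^ (k * p) + k / (k + 2) * (tan x / x) ^ p

section wilkerSum

variable {k p s x : ℝ}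

lemma wilkerSum_eq (hx : x ≠ 0) : wilkerSum k p x =
    2 / (k + 2) * sinc x ^ (k * p) + k / (k + 2) * (sinc x / cos x) ^ p := by
  rw [wilkerSum, tan_div_self_eq_sinc_div_cos hx, sinc_of_ne_zero hx]

lemma two_div_add_div_eq_one (hk : 0 < k) : 2 / (k + 2) + k / (k + 2) = 1 := by
  field_simp
  ring

lemma one_lt_wilkerSum_of_pos (hk : 0 < k) (hp : 0 < p) (hx : x ∈ Ioo 0 (π / 2)) :
    1 < wilkerSum k p x := by
  have hz := sinc_pos_of_lt_pi_div_two hx.1.le hx.2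
  have hcos := cos_pos_of_mem_Ico_zero_pi_div_two ⟨hx.1.le, hx.2⟩
  have hproduct : 1 < sinc x ^ 3 / cos x := (one_lt_div hcos).2 (cos_lt_sinc_pow_three hx)
  rw [wilkerSum_eq hx.1.ne']
  calc 1 < (sinc x ^ 3 / cos x) ^ (p * (k / (k + 2))) := one_lt_rpow hproduct (by positivity)
    _ = (sinc x ^ (2 : ℝ) * (sinc x / cos x)) ^ (p * (k / (k + 2))) := by
        congr 1
        rw [rpow_two]
        ring
    _ = (sinc x ^ (k * p)) ^ (2 / (k + 2)) * ((sinc x / cos x) ^ p) ^ (k / (k + 2)) := by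
        rw [mul_rpow (by positivity) (by positivity), ← rpow_mul hz.le, ← rpow_mul hz.le,
          ← rpow_mul (by positivity)]
        congr 2
        ring
    _ ≤ _ := geom_mean_le_arith_mean2_weighted (by positivity) (by positivity) (by positivity)
        (by positivity) (two_div_add_div_eq_one hk)

lemma one_lt_wilkerSum_neg_div (hk : 0 < k) (hs : 7 / 8 ≤ s) (hks : (π / 2) ^ s = (k + 2) / 2)
    (hx : x ∈ Ioo 0 (π / 2)) : 1 < wilkerSum k (-(s / k)) x := by
  have hs₀ : 0 < s := by linarith
  have hz := sinc_pos_of_lt_pi_div_two hx.1.le hx.2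
  have hcos := cos_pos_of_mem_Ico_zero_pi_div_two ⟨hx.1.le, hx.2⟩
  have hw : 0 < 1 - (π / 2 * sinc x) ^ (-s) := sub_pos.2 <|
    rpow_lt_one_of_one_lt_of_neg (one_lt_pi_div_two_mul_sinc hx.1.le hx.2) (neg_lt_zero.2 hs₀)
  have hgap := wilkerGap_zero_lt hk hs hks hx
  rw [wilkerGap_zero hk hks, wilkerGap] at hgap
  have hlog : log (1 - (π / 2 * sinc x) ^ (-s)) <
      log (k / (k + 2)) + -(s / k) * log (sinc x / cos x) := by
    rw [log_div hz.ne' hcos.ne']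
    have hscaled := mul_lt_mul_of_pos_left hgap (div_pos hs₀ hk)
    field_simp at hscaled ⊢
    linarith
  have hsinc : (π / 2 * sinc x) ^ (-s) = 2 / (k + 2) * sinc x ^ (k * -(s / k)) := by
    rw [mul_rpow pi_div_two_pos.le hz.le, rpow_neg pi_div_two_pos.le, hks, inv_div, mul_neg,
      mul_div_cancel₀ s hk.ne']
  rw [← log_rpow (by positivity), ← log_mul (by positivity) (by positivity),
    log_lt_log_iff hw (by positivity), hsinc] at hlog
  rw [wilkerSum_eq hx.1.ne']
  linarith

lemma one_lt_wilkerSum_mul {t : ℝ} (hk : 0 < k) (hx : x ∈ Ioo 0 (π / 2)) (ht : 1 ≤ t)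
    (h : 1 < wilkerSum k p x) : 1 < wilkerSum k (p * t) x := by
  have hz := sinc_pos_of_lt_pi_div_two hx.1.le hx.2
  have hcos := cos_pos_of_mem_Ico_zero_pi_div_two ⟨hx.1.le, hx.2⟩
  rw [wilkerSum_eq hx.1.ne'] at h ⊢
  rw [← mul_assoc, rpow_mul hz.le (k * p), rpow_mul (div_pos hz hcos).le]
  exact one_lt_add_mul_rpow (by positivity) (by positivity) (two_div_add_div_eq_one hk)
    (by positivity) (by positivity) ht h

lemma one_lt_wilkerSum_of_le_neg_div (hk : 0 < k) (hs : 7 / 8 ≤ s)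
    (hks : (π / 2) ^ s = (k + 2) / 2) (hp : p ≤ -(s / k)) (hx : x ∈ Ioo 0 (π / 2)) :
    1 < wilkerSum k p x := by
  have hq : -(s / k) < 0 := neg_lt_zero.2 (div_pos (by linarith) hk)
  have ht : 1 ≤ p / -(s / k) := (one_le_div_of_neg hq).2 hp
  have := one_lt_wilkerSum_mul hk hx ht (one_lt_wilkerSum_neg_div hk hs hks hx)
  rwa [mul_div_cancel₀ p hq.ne] at this

lemma tendsto_wilkerSum_pi_div_two (hp : p < 0) :
    Tendsto (wilkerSum k p) (𝓝[<] (π / 2)) (𝓝 (2 / (k + 2) * (2 / π) ^ (k * p))) := by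
  have hsin : Tendsto (fun x ↦ sin x / x) (𝓝[<] (π / 2)) (𝓝 (2 / π)) := by
    have hcont : ContinuousAt (fun x ↦ sin x / x) (π / 2) :=
      continuous_sin.continuousAt.div continuousAt_id pi_div_two_pos.ne'
    simpa [ContinuousAt] using hcont.tendsto.mono_left nhdsWithin_le_nhds
  have htan : Tendsto (fun x ↦ tan x / x) (𝓝[<] (π / 2)) atTop := by
    refine tendsto_tan_pi_div_two.atTop_mul_pos (inv_pos.2 pi_div_two_pos) ?_
    exact (continuousAt_inv₀ pi_div_two_pos.ne').tendsto.mono_left nhdsWithin_le_nhds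
  have hzero : Tendsto (fun x ↦ (tan x / x) ^ p) (𝓝[<] (π / 2)) (𝓝 0) := by
    simpa [Function.comp_def] using (tendsto_rpow_neg_atTop (neg_pos.2 hp)).comp htan
  have hfirst := hsin.rpow_const (p := k * p) (.inl (by positivity))
  unfold wilkerSum
  simpa only [mul_zero, add_zero] using
    (hfirst.const_mul (2 / (k + 2))).add (hzero.const_mul (k / (k + 2)))

lemma le_neg_div_of_forall_one_lt_wilkerSum (hk : 0 < k) (hks : (π / 2) ^ s = (k + 2) / 2)
    (hp : p < 0) (h : ∀ x ∈ Ioo 0 (π / 2), 1 < wilkerSum k p x) : p ≤ -(s / k) := by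
  have hlimit : 1 ≤ 2 / (k + 2) * (2 / π) ^ (k * p) := by
    refine ge_of_tendsto (tendsto_wilkerSum_pi_div_two hp) ?_
    filter_upwards [Ioo_mem_nhdsLT pi_div_two_pos] with x hx using (h x hx).le
  have hpow : (π / 2) ^ s ≤ (π / 2) ^ (-(k * p)) := by
    rw [rpow_neg pi_div_two_pos.le, ← inv_rpow pi_div_two_pos.le, inv_div, hks]
    rw [div_mul_eq_mul_div, le_div_iff₀ (by linarith)] at hlimit
    linarith
  have hexp : s ≤ -(k * p) := (rpow_le_rpow_left_iff (by linarith [pi_gt_three])).1 hpow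
  rw [← neg_div, le_div_iff₀ hk]
  linarith

end wilkerSum

lemma log_ratio_eq_logb_div {k : ℝ} (hk : 0 < k) :
    (log (k + 2) - log 2) / (k * (log π - log 2)) = logb (π / 2) ((k + 2) / 2) / k := by
  rw [logb, log_div (by positivity) two_ne_zero, log_div pi_ne_zero two_ne_zero, div_div,
    mul_comm k]

lemma seven_eighths_le_logb {k : ℝ} (hk : 1 ≤ k) : 7 / 8 ≤ logb (π / 2) ((k + 2) / 2) := by
  rw [le_logb_iff_rpow_le (by linarith [pi_gt_three]) (by linarith)]
  linarith [pi_div_two_rpow_seven_eighths_le]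

theorem wilker_trig_gt (k : ℝ) (hk : 1 ≤ k) (p : ℝ) (hp : p ≠ 0) :
    (∀ x ∈ Ioo (0 : ℝ) (π / 2),
        2 / (k + 2) * (sin x / x) ^ (k * p) + k / (k + 2) * (tan x / x) ^ p > 1) ↔
      (0 < p ∨ p ≤ -((Real.log (k + 2) - Real.log 2) / (k * (Real.log π - Real.log 2)))) := by
  have hk₀ : 0 < k := by linarith
  have hs : 7 / 8 ≤ logb (π / 2) ((k + 2) / 2) := seven_eighths_le_logb hk
  have hks : (π / 2) ^ logb (π / 2) ((k + 2) / 2) = (k + 2) / 2 :=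
    rpow_logb pi_div_two_pos (by linarith [pi_gt_three]) (by linarith)
  rw [log_ratio_eq_logb_div hk₀]
  constructor
  · intro h
    rcases lt_or_gt_of_ne hp with hneg | hpos
    · exact .inr (le_neg_div_of_forall_one_lt_wilkerSum hk₀ hks hneg h)
    · exact .inl hpos
  · rintro (hpos | hle) x hx
    · exact one_lt_wilkerSum_of_pos hk₀ hpos hx
    · exact one_lt_wilkerSum_of_le_neg_div hk₀ hs hks hle hx
end

section
/- Fix a real number k < −2. The inequality (2/(k+2))·(sinh(x)/x)^(k·p) + (k/(k+2))·(tanh(x)/x)^p < 1 holds for every x ∈ (0, ∞) if and only if p < 0 or p ≥ −12/(5(k+2)). -/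
open Real Set
open Filter Topology Asymptotics
open scoped Nat

/-!
Write `S = sinh x / x > 1`, `T = tanh x / x`, `t = -2 / (k + 2) > 0` and `p = t * c`. The inequality
becomes `(1 + t) * T ^ (t * c) < 1 + t * S ^ (-2 * (1 + t) * c)`, and the threshold becomes
`c < 0 ∨ 6 / 5 ≤ c`, independently of `t`.

For `c < 0` it follows from `x ^ 3 * cosh x ≤ sinh x ^ 3`, i.e. `1 ≤ S ^ 2 * T`, and Bernoulli's
inequality. For `c ≥ 6 / 5`, put `u = S ^ (-2 * c)`: the inequality `1 - u ≤ -c * log T` bounds the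
left side by `(1 + t) * exp (t * (u - 1))`, which is less than `1 + t * u ^ (1 + t)` for `u < 1`.
By Bernoulli it suffices to prove `1 - u ≤ -c * log T` for `c = 6 / 5`; both sides vanish as
`x → 0`, and for their derivatives Bernoulli replaces `S ^ (12 / 5)` by `(6 * S ^ 2 - 1) / 5`,
leaving an inequality between power series that holds coefficientwise. The factor `6 / 5` is
necessary because the two sides of the original inequality agree at `x = 0` up to order `x ^ 3`,
and at order `x ^ 4` their difference has the sign of `c * (c - 6 / 5)`.
-/

section HyperbolicSeries

lemma hasSum_sq_mul_of_shift {a : ℕ → ℝ} {y s : ℝ}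
    (h : HasSum (fun n ↦ a (n + 1) * (y ^ (2 * n + 1) / (2 * n + 1)!)) s) :
    HasSum (fun n ↦ (2 * n + 1) * (2 * n) * a n * (y ^ (2 * n + 1) / (2 * n + 1)!))
      (y ^ 2 * s) := by
  rw [← hasSum_nat_add_iff' 1]
  simp only [Finset.sum_range_one, Nat.cast_zero, mul_zero, zero_mul, sub_zero]
  refine (h.mul_left (y ^ 2)).congr_fun fun n ↦ ?_
  rw [show 2 * (n + 1) + 1 = (2 * n + 1) + 1 + 1 by ring, Nat.factorial_succ (2 * n + 1 + 1),
    Nat.factorial_succ (2 * n + 1)]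
  push_cast
  field_simp
  ring

lemma hasSum_mul_cosh (y : ℝ) :
    HasSum (fun n : ℕ ↦ (2 * n + 1) * (y ^ (2 * n + 1) / (2 * n + 1)!)) (y * cosh y) := by
  refine ((hasSum_cosh y).mul_left y).congr_fun fun n ↦ ?_
  rw [Nat.factorial_succ]
  push_cast
  field_simp
  ring

lemma hasSum_sq_mul_sinh (y : ℝ) :
    HasSum (fun n : ℕ ↦ (2 * n + 1) * (2 * n) * (y ^ (2 * n + 1) / (2 * n + 1)!))
      (y ^ 2 * sinh y) := by
  simpa only [mul_one] using hasSum_sq_mul_of_shift (a := fun _ ↦ 1) (y := y)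
    (by simpa only [one_mul] using hasSum_sinh y)

lemma hasSum_cube_mul_cosh (y : ℝ) :
    HasSum (fun n : ℕ ↦ (2 * n + 1) * (2 * n) * (2 * n - 1) * (y ^ (2 * n + 1) / (2 * n + 1)!))
      (y ^ 3 * cosh y) := by
  rw [pow_succ, mul_assoc]
  refine hasSum_sq_mul_of_shift (a := fun n ↦ 2 * n - 1) ?_
  refine (hasSum_mul_cosh y).congr_fun fun n ↦ ?_
  push_cast
  ring

lemma cubic_le_three_mul_nine_pow (n : ℕ) : 4 * ((2 * n + 1) * (2 * n) * (2 * n - 1)) + 3 ≤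
    (3 : ℝ) * 9 ^ n := by
  induction n with
  | zero => norm_num
  | succ n ih =>
    have h : (0 : ℝ) ≤ n * (n - 1) := by
      rcases n with _ | n
      · simp
      · push_cast; rw [add_sub_cancel_right]; positivity
    have h' := mul_nonneg h (show (0 : ℝ) ≤ 8 * n + 5 by positivity)
    rw [pow_succ]
    push_cast
    linarith

lemma cubic_le_twelve_mul_four_pow {n : ℕ} (hn : 2 ≤ n) :
    5 * ((2 * n + 1) * (2 * n) * (2 * n - 1)) - 9 * ((2 * n + 1) * (2 * n)) + 12 * (2 * n + 1) + 12
      ≤ (12 : ℝ) * 4 ^ n := by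
  induction n, hn using Nat.le_induction with
  | base => norm_num
  | succ n hn ih =>
    have hn' : (2 : ℝ) ≤ n := mod_cast hn
    have h := mul_nonneg (sub_nonneg.2 hn') (show (0 : ℝ) ≤ 10 * n ^ 2 + n - 3 by nlinarith)
    rw [pow_succ]
    push_cast
    linarith

lemma cube_mul_cosh_add_le_sinh_cube {x : ℝ} (hx : 0 ≤ x) :
    x ^ 3 * cosh x + x ^ 7 / 15 ≤ sinh x ^ 3 := by
  have hsum := ((hasSum_sinh (3 * x)).sub ((hasSum_sinh x).mul_left 3)).sub
    ((hasSum_cube_mul_cosh x).mul_left 4)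
  have hpartial := sum_le_hasSum (Finset.range 4) (fun n _ ↦ ?_) hsum
  · rw [sinh_three_mul] at hpartial
    norm_num [Finset.sum_range_succ, Nat.factorial] at hpartial
    linarith
  · have hcoeff := mul_nonneg (sub_nonneg.2 (cubic_le_three_mul_nine_pow n))
      (show 0 ≤ x ^ (2 * n + 1) / (2 * n + 1)! by positivity)
    refine hcoeff.trans_eq ?_
    rw [mul_pow, pow_succ 3, pow_mul 3 2]
    ring

lemma five_mul_cube_mul_cosh_add_le_six_mul_sinh_two_mul_add {y : ℝ} (hy : 0 ≤ y) :
    5 * y ^ 3 * cosh y + 4 * y ^ 3 + 12 * y * cosh y + 12 * sinh y ≤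
      6 * sinh (2 * y) + 9 * y ^ 2 * sinh y + 12 * y := by
  have hsum := (((((hasSum_sinh (2 * y)).mul_left 6).sub ((hasSum_sinh y).mul_left 12)).sub
    ((hasSum_mul_cosh y).mul_left 12)).add ((hasSum_sq_mul_sinh y).mul_left 9)).sub
    ((hasSum_cube_mul_cosh y).mul_left 5)
  have hpartial := sum_le_hasSum (Finset.range 2) (fun n hn ↦ ?_) hsum
  · norm_num [Finset.sum_range_succ, Nat.factorial] at hpartial
    linarith
  · have hcoeff := mul_nonneg
      (sub_nonneg.2 (cubic_le_twelve_mul_four_pow (not_lt.1 (mt Finset.mem_range.2 hn))))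
      (show 0 ≤ y ^ (2 * n + 1) / (2 * n + 1)! by positivity)
    refine hcoeff.trans_eq ?_
    rw [mul_pow, pow_succ 2, pow_mul 2 2]
    ring

lemma mul_cosh_sub_sinh_le_mul_sinh_mul_cosh_sub {x : ℝ} (hx : 0 ≤ x) :
    10 * x ^ 2 * cosh x * (x * cosh x - sinh x) ≤
      (sinh x * cosh x - x) * (6 * sinh x ^ 2 - x ^ 2) := by
  have h := five_mul_cube_mul_cosh_add_le_six_mul_sinh_two_mul_add (y := 2 * x) (by positivity)
  rw [sinh_two_mul (2 * x), sinh_two_mul x, cosh_two_mul x, cosh_sq] at h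
  linear_combination h / 8 + 10 * x ^ 3 * cosh_sq x

end HyperbolicSeries

section Asymptotics

variable {α : Type*} {l : Filter α} {f g : α → ℝ} {a : ℝ}

lemma isBigO_of_tendsto_div (hg : Tendsto g l (𝓝[≠] 0))
    (h : Tendsto (fun x ↦ f x / g x) l (𝓝 a)) : f =O[l] g :=
  isBigO_of_div_tendsto_nhds
    ((tendsto_nhdsWithin_iff.1 hg).2.mono fun _ hne h0 ↦ absurd h0 hne) a h

lemma tendsto_zero_of_tendsto_div (hg : Tendsto g l (𝓝[≠] 0))
    (h : Tendsto (fun x ↦ f x / g x) l (𝓝 a)) : Tendsto f l (𝓝 0) :=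
  (isBigO_of_tendsto_div hg h).trans_tendsto (tendsto_nhds_of_tendsto_nhdsWithin hg)

lemma tendsto_log_one_add_div (hg : Tendsto g l (𝓝[≠] 0))
    (h : Tendsto (fun x ↦ f x / g x) l (𝓝 a)) :
    Tendsto (fun x ↦ log (1 + f x) / g x) l (𝓝 a) := by
  have hslope : Tendsto (dslope log 1) (𝓝 1) (𝓝 1) := by
    have hcont := continuousAt_dslope_same.2 (differentiableAt_log one_ne_zero)
    simpa [ContinuousAt] using hcont
  have hf : Tendsto (fun x ↦ 1 + f x) l (𝓝 1) := by
    simpa using (tendsto_zero_of_tendsto_div hg h).const_add 1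
  have hlog (x : α) : f x * dslope log 1 (1 + f x) = log (1 + f x) := by
    simpa using sub_smul_dslope log 1 (1 + f x)
  simpa [← hlog, div_mul_eq_mul_div] using h.mul (hslope.comp hf)

lemma tendsto_exp_sub_one_sub_div_sq (hg : Tendsto g l (𝓝[≠] 0))
    (h : Tendsto (fun x ↦ f x / g x) l (𝓝 a)) :
    Tendsto (fun x ↦ (exp (f x) - 1 - f x) / g x ^ 2) l (𝓝 (a ^ 2 / 2)) := by
  have hrem : Tendsto (fun x ↦ (exp (f x) - (1 + f x + f x ^ 2 / 2)) / g x ^ 2) l (𝓝 0) := by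
    have hexp := (exp_sub_sum_range_succ_isLittleO_pow 2).comp_tendsto
      (tendsto_zero_of_tendsto_div hg h)
    refine IsLittleO.tendsto_div_nhds_zero ?_
    simpa [Finset.sum_range_succ, Function.comp_def] using
      hexp.trans_isBigO ((isBigO_of_tendsto_div hg h).pow 2)
  refine (zero_add (a ^ 2 / 2) ▸ hrem.add ((h.pow 2).div_const 2)).congr fun x ↦ ?_
  ring

lemma tendsto_pow_nhdsGT_zero {n : ℕ} (hn : n ≠ 0) :
    Tendsto (fun x : ℝ ↦ x ^ n) (𝓝[>] 0) (𝓝[≠] 0) := by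
  refine tendsto_nhdsWithin_iff.2 ⟨?_, ?_⟩
  · exact ((continuous_pow n).tendsto' 0 0 (zero_pow hn)).mono_left nhdsWithin_le_nhds
  · filter_upwards [self_mem_nhdsWithin] with x hx using pow_ne_zero n (ne_of_gt hx)

lemma tendsto_cosh_sub_one_div_sq :
    Tendsto (fun x ↦ (cosh x - 1) / x ^ 2) (𝓝[>] 0) (𝓝 (1 / 2)) := by
  have hg : Tendsto (fun x : ℝ ↦ x) (𝓝[>] 0) (𝓝[≠] 0) := by
    simpa using tendsto_pow_nhdsGT_zero one_ne_zero
  have hratio (b : ℝ) : Tendsto (fun x : ℝ ↦ b * x / x) (𝓝[>] 0) (𝓝 b) := by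
    refine tendsto_const_nhds.congr' ?_
    filter_upwards [self_mem_nhdsWithin] with x hx
    exact (mul_div_cancel_right₀ b (ne_of_gt hx)).symm
  rw [show (1 / 2 : ℝ) = (1 ^ 2 / 2 + (-1) ^ 2 / 2) / 2 by norm_num]
  refine (((tendsto_exp_sub_one_sub_div_sq hg (hratio 1)).add
    (tendsto_exp_sub_one_sub_div_sq hg (hratio (-1)))).div_const 2).congr fun x ↦ ?_
  simp only [cosh_eq, one_mul, neg_one_mul]
  ring

lemma tendsto_sinh_sub_self_div_cube :
    Tendsto (fun x ↦ (sinh x - x) / x ^ 3) (𝓝[>] 0) (𝓝 (1 / 6)) := by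
  refine HasDerivAt.lhopital_zero_nhdsGT (f' := fun x ↦ cosh x - 1) (g' := fun x ↦ 3 * x ^ 2)
    (.of_forall fun x ↦ (hasDerivAt_sinh x).sub (hasDerivAt_id x))
    (.of_forall fun x ↦ by simpa using hasDerivAt_pow 3 x) ?_ ?_ ?_ ?_
  · filter_upwards [self_mem_nhdsWithin] with x hx
    have hx : 0 < x := hx
    positivity
  · exact ((continuous_sinh.sub continuous_id).tendsto' 0 0 (by simp)).mono_left
      nhdsWithin_le_nhds
  · exact tendsto_nhds_of_tendsto_nhdsWithin (tendsto_pow_nhdsGT_zero three_ne_zero)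
  · convert! tendsto_cosh_sub_one_div_sq.div_const 3 using 2 <;> ring

end Asymptotics

section SinhTanhQuotients

variable {x : ℝ}

lemma one_lt_sinh_div_self (hx : 0 < x) : 1 < sinh x / x :=
  (one_lt_div hx).2 (self_lt_sinh_iff.2 hx)

lemma tanh_div_self_pos (hx : 0 < x) : 0 < tanh x / x := by
  rw [tanh_eq_sinh_div_cosh]
  exact div_pos (div_pos (sinh_pos_iff.2 hx) (cosh_pos x)) hx

lemma log_tanh_div_self (hx : 0 < x) :
    log (tanh x / x) = log (sinh x / x) - log (cosh x) := by
  have := sinh_pos_iff.2 hx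
  rw [tanh_eq_sinh_div_cosh, div_right_comm, log_div (by positivity) (cosh_pos x).ne']

lemma log_one_add_le_log_sinh_add_log_tanh (hx : 0 < x) :
    log (1 + x ^ 4 / (15 * cosh x)) ≤ 2 * log (sinh x / x) + log (tanh x / x) := by
  have := sinh_pos_iff.2 hx
  have hc := cosh_pos x
  have hcube : 1 + x ^ 4 / (15 * cosh x) ≤ (sinh x / x) ^ 3 / cosh x := by
    rw [div_pow, div_div, le_div_iff₀ (by positivity)]
    refine le_of_eq_of_le ?_ (cube_mul_cosh_add_le_sinh_cube hx.le)
    field_simp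
  calc log (1 + x ^ 4 / (15 * cosh x)) ≤ log ((sinh x / x) ^ 3 / cosh x) :=
        log_le_log (by positivity) hcube
    _ = 2 * log (sinh x / x) + log (tanh x / x) := by
        rw [log_div (by positivity) hc.ne', log_pow, log_tanh_div_self hx]
        push_cast
        ring

lemma log_sinh_add_log_tanh_nonneg (hx : 0 < x) :
    0 ≤ 2 * log (sinh x / x) + log (tanh x / x) := by
  have := cosh_pos x
  refine (log_nonneg ?_).trans (log_one_add_le_log_sinh_add_log_tanh hx)
  rw [le_add_iff_nonneg_right]
  positivity

lemma hasDerivAt_log_sinh_div_self (hx : 0 < x) :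
    HasDerivAt (fun y ↦ log (sinh y / y)) ((x * cosh x - sinh x) / (x * sinh x)) x := by
  have := sinh_pos_iff.2 hx
  have hlog := ((hasDerivAt_sinh x).fun_div (hasDerivAt_id' x) hx.ne').log (by positivity)
  refine hlog.congr_deriv ?_
  field_simp

lemma hasDerivAt_log_tanh_div_self (hx : 0 < x) :
    HasDerivAt (fun y ↦ log (tanh y / y))
      (-((sinh x * cosh x - x) / (x * sinh x * cosh x))) x := by
  have := sinh_pos_iff.2 hx
  have hc := cosh_pos x
  have heq : (fun y ↦ log (tanh y / y)) =ᶠ[𝓝 x]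
      fun y ↦ log (sinh y / y) - log (cosh y) := by
    filter_upwards [Ioi_mem_nhds hx] with y hy using log_tanh_div_self hy
  refine (((hasDerivAt_log_sinh_div_self hx).sub
    ((hasDerivAt_cosh x).log hc.ne')).congr_of_eventuallyEq heq).congr_deriv ?_
  field_simp
  linear_combination x * cosh_sq x

lemma tendsto_log_sinh_div_self_div_sq :
    Tendsto (fun x ↦ log (sinh x / x) / x ^ 2) (𝓝[>] 0) (𝓝 (1 / 6)) := by
  have h : Tendsto (fun x ↦ (sinh x / x - 1) / x ^ 2) (𝓝[>] 0) (𝓝 (1 / 6)) := by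
    refine tendsto_sinh_sub_self_div_cube.congr' ?_
    filter_upwards [self_mem_nhdsWithin] with x hx
    have hx : x ≠ 0 := ne_of_gt hx
    field_simp
  simpa using tendsto_log_one_add_div (tendsto_pow_nhdsGT_zero two_ne_zero) h

lemma tendsto_log_tanh_div_self_div_sq :
    Tendsto (fun x ↦ log (tanh x / x) / x ^ 2) (𝓝[>] 0) (𝓝 (-(1 / 3))) := by
  have hcosh : Tendsto (fun x ↦ log (cosh x) / x ^ 2) (𝓝[>] 0) (𝓝 (1 / 2)) := by
    simpa using tendsto_log_one_add_div (tendsto_pow_nhdsGT_zero two_ne_zero)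
      tendsto_cosh_sub_one_div_sq
  rw [show (-(1 / 3) : ℝ) = 1 / 6 - 1 / 2 by norm_num]
  refine (tendsto_log_sinh_div_self_div_sq.sub hcosh).congr' ?_
  filter_upwards [self_mem_nhdsWithin] with x hx
  rw [log_tanh_div_self hx, sub_div]

lemma two_mul_deriv_log_sinh_le (hx : 0 < x) :
    2 * ((x * cosh x - sinh x) / (x * sinh x)) ≤
      (sinh x * cosh x - x) / (x * sinh x * cosh x) * (sinh x / x) ^ (12 / 5 : ℝ) := by
  have hs := sinh_pos_iff.2 hx
  have := cosh_pos x
  have := one_lt_sinh_div_self hx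
  have bernoulli : (6 * (sinh x / x) ^ 2 - 1) / 5 ≤ (sinh x / x) ^ (12 / 5 : ℝ) := by
    have h := one_add_mul_self_le_rpow_one_add (s := (sinh x / x) ^ 2 - 1) (p := 6 / 5)
      (by linarith [sq_nonneg (sinh x / x)]) (by norm_num)
    rw [add_sub_cancel, ← rpow_natCast_mul (by positivity)] at h
    norm_num at h ⊢
    linarith
  have hnum : 0 ≤ sinh x * cosh x - x := by
    nlinarith [self_le_sinh_iff.2 hx.le, one_le_cosh x]
  calc 2 * ((x * cosh x - sinh x) / (x * sinh x))
      = 10 * x ^ 2 * cosh x * (x * cosh x - sinh x) / (5 * x ^ 3 * sinh x * cosh x) := by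
        field_simp
        ring
    _ ≤ (sinh x * cosh x - x) * (6 * sinh x ^ 2 - x ^ 2) / (5 * x ^ 3 * sinh x * cosh x) := by
        gcongr ?_ / _
        exact mul_cosh_sub_sinh_le_mul_sinh_mul_cosh_sub hx.le
    _ = (sinh x * cosh x - x) / (x * sinh x * cosh x) * ((6 * (sinh x / x) ^ 2 - 1) / 5) := by
        field_simp
    _ ≤ _ := by gcongr

lemma one_sub_rpow_le_neg_log_tanh (hx : 0 < x) :
    1 - (sinh x / x) ^ (-(12 / 5) : ℝ) ≤ -(6 / 5 * log (tanh x / x)) := by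
  let f : ℝ → ℝ := fun y ↦
    exp (log (sinh y / y) * (-(12 / 5))) - log (tanh y / y) * (6 / 5) - 1
  have hderiv {y : ℝ} (hy : 0 < y) : HasDerivAt f
      (exp (log (sinh y / y) * (-(12 / 5))) *
          ((y * cosh y - sinh y) / (y * sinh y) * (-(12 / 5))) -
        -((sinh y * cosh y - y) / (y * sinh y * cosh y)) * (6 / 5)) y :=
    (((hasDerivAt_log_sinh_div_self hy).mul_const (-(12 / 5))).exp.fun_sub
      ((hasDerivAt_log_tanh_div_self hy).mul_const (6 / 5))).sub_const 1
  have hmono : MonotoneOn f (Ioi 0) := by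
    refine monotoneOn_of_hasDerivWithinAt_nonneg (convex_Ioi 0)
      (fun y hy ↦ (hderiv hy).continuousAt.continuousWithinAt)
      (fun y hy ↦ (hderiv (interior_subset hy)).hasDerivWithinAt) fun y hy ↦ ?_
    have hy : 0 < y := interior_subset hy
    have hS : 0 < sinh y / y := zero_lt_one.trans (one_lt_sinh_div_self hy)
    have h := mul_le_mul_of_nonneg_left (two_mul_deriv_log_sinh_le hy)
      (rpow_pos_of_pos hS (-(12 / 5))).le
    rw [mul_left_comm (_ ^ _) (_ / _) (_ ^ _), ← rpow_add hS, neg_add_cancel, rpow_zero,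
      mul_one] at h
    rw [← rpow_def_of_pos hS]
    linarith
  have hlim : Tendsto f (𝓝[>] 0) (𝓝 0) := by
    have hg := tendsto_pow_nhdsGT_zero two_ne_zero
    have hS := tendsto_zero_of_tendsto_div hg tendsto_log_sinh_div_self_div_sq
    have hT := tendsto_zero_of_tendsto_div hg tendsto_log_tanh_div_self_div_sq
    simpa only [zero_mul, exp_zero, sub_zero, sub_self] using
      ((hS.mul_const (-(12 / 5))).rexp.sub (hT.mul_const (6 / 5))).sub_const 1
  have hnonneg : 0 ≤ f x := by
    refine le_of_tendsto hlim ?_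
    filter_upwards [Ioc_mem_nhdsGT hx] with y hy using hmono hy.1 hx hy.2
  rw [rpow_def_of_pos (zero_lt_one.trans (one_lt_sinh_div_self hx))]
  dsimp only [f] at hnonneg
  linarith

lemma one_sub_rpow_le_neg_mul_log_tanh (hx : 0 < x) {c : ℝ} (hc : 6 / 5 ≤ c) :
    1 - (sinh x / x) ^ (-(2 * c)) ≤ -(c * log (tanh x / x)) := by
  have hS : 0 < sinh x / x := zero_lt_one.trans (one_lt_sinh_div_self hx)
  have bernoulli := one_add_mul_self_le_rpow_one_add
    (s := (sinh x / x) ^ (-(12 / 5) : ℝ) - 1) (p := c / (6 / 5))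
    (by linarith [rpow_pos_of_pos hS (-(12 / 5))]) ((one_le_div (by norm_num)).2 hc)
  rw [add_sub_cancel, ← rpow_mul hS.le,
    show -(12 / 5) * (c / (6 / 5)) = -(2 * c) by ring] at bernoulli
  have h := mul_le_mul_of_nonneg_left (one_sub_rpow_le_neg_log_tanh hx)
    (show 0 ≤ c / (6 / 5) by positivity)
  linarith

end SinhTanhQuotients

lemma mul_exp_lt_one_add_mul_rpow {t u : ℝ} (ht : 0 < t) (hu : 0 < u) (hu1 : u < 1) :
    (1 + t) * exp (t * (u - 1)) < 1 + t * u ^ (1 + t) := by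
  let D : ℝ → ℝ := fun u ↦ 1 + t * u ^ (1 + t) - (1 + t) * exp (t * (u - 1))
  have hderiv (v : ℝ) : HasDerivAt D
      (t * ((1 + t) * v ^ (1 + t - 1)) - (1 + t) * (exp (t * (v - 1)) * (t * 1))) v :=
    (((hasDerivAt_rpow_const (.inr (by linarith))).const_mul t).const_add 1).sub
      ((((hasDerivAt_id v).sub_const 1).const_mul t).exp.const_mul (1 + t))
  have hanti : StrictAntiOn D (Icc u 1) := by
    refine strictAntiOn_of_hasDerivWithinAt_neg (convex_Icc u 1)
      (fun v _ ↦ (hderiv v).continuousAt.continuousWithinAt)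
      (fun v _ ↦ (hderiv v).hasDerivWithinAt) fun v hv ↦ ?_
    rw [interior_Icc] at hv
    have hv0 : 0 < v := hu.trans hv.1
    have hlt : v ^ t < exp (t * (v - 1)) := by
      rw [rpow_def_of_pos hv0, exp_lt_exp, mul_comm]
      exact mul_lt_mul_of_pos_left (log_lt_sub_one_of_pos hv0 hv.2.ne) ht
    rw [add_sub_cancel_left]
    linarith [mul_lt_mul_of_pos_left hlt (show 0 < t * (1 + t) by positivity)]
  have h := hanti (left_mem_Icc.2 hu1.le) (right_mem_Icc.2 hu1.le) hu1
  simp only [D, one_rpow, sub_self, mul_zero, exp_zero] at h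
  linarith

section Wilker

variable {S T t c : ℝ}

lemma wilker_lt_of_neg (hS : 1 < S) (hT : 0 < T) (hST : 0 ≤ 2 * log S + log T) (ht : 0 < t)
    (hc : c < 0) : (1 + t) * T ^ (t * c) < 1 + t * S ^ (-(2 * (1 + t) * c)) := by
  have hS0 : 0 < S := zero_lt_one.trans hS
  have hTle : T ^ (t * c) ≤ S ^ (-(2 * t * c)) := by
    rw [rpow_def_of_pos hT, rpow_def_of_pos hS0, exp_le_exp]
    linarith [mul_nonpos_of_nonpos_of_nonneg (mul_neg_of_pos_of_neg ht hc).le hST]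
  have hone : 1 < S ^ (-(2 * t * c)) := one_lt_rpow hS (by nlinarith)
  have bernoulli := one_add_mul_self_lt_rpow_one_add (s := S ^ (-(2 * t * c)) - 1)
    (p := (1 + t) / t) (by linarith) (by linarith) ((one_lt_div ht).2 (by linarith))
  rw [add_sub_cancel, ← rpow_mul hS0.le,
    show -(2 * t * c) * ((1 + t) / t) = -(2 * (1 + t) * c) by field_simp] at bernoulli
  calc (1 + t) * T ^ (t * c) ≤ (1 + t) * S ^ (-(2 * t * c)) := by gcongr
    _ = 1 + t * (1 + (1 + t) / t * (S ^ (-(2 * t * c)) - 1)) := by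
        field_simp
        ring
    _ < 1 + t * S ^ (-(2 * (1 + t) * c)) := by gcongr

lemma wilker_lt_of_pos (hS : 1 < S) (hT : 0 < T) (ht : 0 < t) (hc : 0 < c)
    (hST : 1 - S ^ (-(2 * c)) ≤ -(c * log T)) :
    (1 + t) * T ^ (t * c) < 1 + t * S ^ (-(2 * (1 + t) * c)) := by
  have hS0 : 0 < S := zero_lt_one.trans hS
  have hTle : T ^ (t * c) ≤ exp (t * (S ^ (-(2 * c)) - 1)) := by
    rw [rpow_def_of_pos hT, exp_le_exp]
    linarith [mul_le_mul_of_nonneg_left hST ht.le]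
  calc (1 + t) * T ^ (t * c) ≤ (1 + t) * exp (t * (S ^ (-(2 * c)) - 1)) := by gcongr
    _ < 1 + t * (S ^ (-(2 * c))) ^ (1 + t) :=
        mul_exp_lt_one_add_mul_rpow ht (rpow_pos_of_pos hS0 _)
          (rpow_lt_one_of_one_lt_of_neg hS (by linarith))
    _ = 1 + t * S ^ (-(2 * (1 + t) * c)) := by
        rw [← rpow_mul hS0.le]
        ring_nf

lemma six_fifths_le_of_forall_wilker_lt (ht : 0 < t) (hc : 0 < c)
    (h : ∀ x > 0, (1 + t) * (tanh x / x) ^ (t * c) <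
      1 + t * (sinh x / x) ^ (-(2 * (1 + t) * c))) : 6 / 5 ≤ c := by
  have hg := tendsto_pow_nhdsGT_zero two_ne_zero
  have hT := tendsto_log_tanh_div_self_div_sq.mul_const (t * c)
  have hS := tendsto_log_sinh_div_self_div_sq.mul_const (-(2 * (1 + t) * c))
  simp only [div_mul_eq_mul_div] at hT hS
  have hST : Tendsto (fun x ↦ log (1 + x ^ 4 / (15 * cosh x)) / x ^ 4) (𝓝[>] 0)
      (𝓝 (1 / 15)) := by
    refine tendsto_log_one_add_div (tendsto_pow_nhdsGT_zero four_ne_zero) ?_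
    have hcont : Continuous fun x ↦ 1 / (15 * cosh x) := by
      fun_prop (disch := intro x; positivity)
    have hcosh : Tendsto (fun x ↦ 1 / (15 * cosh x)) (𝓝[>] 0) (𝓝 (1 / 15)) :=
      (hcont.tendsto' 0 _ (by simp)).mono_left nhdsWithin_le_nhds
    refine hcosh.congr' ?_
    filter_upwards [self_mem_nhdsWithin] with x hx
    have hx : x ≠ 0 := ne_of_gt hx
    have := cosh_pos x
    field_simp
  have hlim := (((tendsto_exp_sub_one_sub_div_sq hg hT).const_mul (1 + t)).sub
    ((tendsto_exp_sub_one_sub_div_sq hg hS).const_mul t)).add (hST.const_mul (t * (1 + t) * c))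
  have hle := le_of_tendsto hlim (b := 0) <| by
    filter_upwards [self_mem_nhdsWithin] with x hx
    have hx : 0 < x := hx
    have hwilker := h x hx
    have hlog := mul_le_mul_of_nonneg_left (log_one_add_le_log_sinh_add_log_tanh hx)
      (show 0 ≤ t * (1 + t) * c by positivity)
    rw [rpow_def_of_pos (tanh_div_self_pos hx),
      rpow_def_of_pos (zero_lt_one.trans (one_lt_sinh_div_self hx))] at hwilker
    rw [← pow_mul, ← mul_div_assoc, ← mul_div_assoc, ← mul_div_assoc, ← sub_div, ← add_div]
    refine div_nonpos_of_nonpos_of_nonneg ?_ (by positivity)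
    linarith
  have hfactor : t * (1 + t) * c * (6 / 5 - c) ≤ 0 := by linarith
  exact sub_nonpos.1 (nonpos_of_mul_nonpos_right hfactor (by positivity))

lemma forall_wilker_lt_iff (ht : 0 < t) (hc : c ≠ 0) :
    (∀ x > 0, (1 + t) * (tanh x / x) ^ (t * c) <
      1 + t * (sinh x / x) ^ (-(2 * (1 + t) * c))) ↔ c < 0 ∨ 6 / 5 ≤ c := by
  constructor
  · intro h
    rcases lt_or_gt_of_ne hc with hneg | hpos
    · exact .inl hneg
    · exact .inr (six_fifths_le_of_forall_wilker_lt ht hpos h)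
  · rintro (hneg | hge) x hx
    · exact wilker_lt_of_neg (one_lt_sinh_div_self hx) (tanh_div_self_pos hx)
        (log_sinh_add_log_tanh_nonneg hx) ht hneg
    · exact wilker_lt_of_pos (one_lt_sinh_div_self hx) (tanh_div_self_pos hx) ht (by linarith)
        (one_sub_rpow_le_neg_mul_log_tanh hx hge)

end Wilker

theorem wilker_hyp_lt (k : ℝ) (hk : k < -2) (p : ℝ) (hp : p ≠ 0) :
    (∀ x ∈ Ioi (0 : ℝ),
        2 / (k + 2) * (sinh x / x) ^ (k * p) + k / (k + 2) * (tanh x / x) ^ p < 1) ↔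
      (p < 0 ∨ p ≥ -(12 / (5 * (k + 2)))) := by
  have hk2 : k + 2 < 0 := by linarith
  obtain ⟨t, ht⟩ : ∃ t, 2 / (k + 2) = -t := ⟨_, (neg_neg _).symm⟩
  have ht0 : 0 < t := by linarith [div_neg_of_pos_of_neg two_pos hk2]
  obtain ⟨c, rfl⟩ : ∃ c, p = t * c := ⟨p / t, (mul_div_cancel₀ p ht0.ne').symm⟩
  have htk : t * (k + 2) = -2 := by linarith [(div_eq_iff hk2.ne).1 ht]
  have hcoeff : k / (k + 2) = 1 + t := (div_eq_iff hk2.ne).2 (by linarith)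
  have hexponent : k * (t * c) = -(2 * (1 + t) * c) := by linear_combination c * htk
  have hthreshold : -(12 / (5 * (k + 2))) = t * (6 / 5) := by
    rw [← div_div, ← neg_div]
    exact (div_eq_iff hk2.ne).2 (by linarith)
  simp only [ht, hcoeff, hexponent, hthreshold, neg_mul t, neg_add_lt_iff_lt_add,
    add_comm _ (1 : ℝ), mul_neg_iff, ht0, ht0.not_gt, true_and, false_and, or_false,
    ge_iff_le, mul_le_mul_iff_right₀]
  exact forall_wilker_lt_iff ht0 (right_ne_zero_of_mul hp)
end
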